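/- Let (g,[p]) be an almost classical semisimple restricted Lie algebra over k. Then the derived subalgebra [g,g] is a classical semisimple p-ideal of g, and V([g,g]) = V(g). -/

import Mathlib

noncomputable section

namespace ElemAb

variable (p : ℕ) (k : Type) [Field k]

/-- The algebra of polynomial functions on a `k`-vector space `V`: the subalgebra of
`V → k` generated by the linear functionals. -/
def polyFuns (V : Type) [AddCommGroup V] [Module k V] : Subalgebra k (V → k) :=
  Algebra.adjoin k {f : V → k | ∃ φ : V →ₗ[k] k, f = ⇑φ}

/-- The Zariski topology on a `k`-vector space: the topology generated by the complements of
zero sets of polynomial functions. -/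
def zar (V : Type) [AddCommGroup V] [Module k V] : TopologicalSpace V :=
  TopologicalSpace.generateFrom {U | ∃ f ∈ polyFuns k V, U = {x | f x ≠ 0}}

variable (L : Type) [LieRing L] [LieAlgebra k L]

/-- A restricted Lie algebra structure (`p`-map) on the Lie algebra `L`:  a map
`x ↦ x^[p]` having the formal properties of a `p`-th power map, namely
`(t • x)^[p] = t^p • x^[p]`, additivity on commuting elements (and, in general, additivity up
to a correction term lying in the subalgebra generated by the two elements), and
`ad (x^[p]) = (ad x)^p`. -/
structure pStructure : Type where
  pmap : L → L
  pmap_smul : ∀ (t : k) (x : L), pmap (t • x) = t ^ p • pmap x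
  pmap_add_of_comm : ∀ x y : L, ⁅x, y⁆ = 0 → pmap (x + y) = pmap x + pmap y
  pmap_add_mem : ∀ x y : L, pmap (x + y) - pmap x - pmap y ∈ LieSubalgebra.lieSpan k L {x, y}
  ad_pmap : ∀ x y : L, ⁅pmap x, y⁆ = ((LieAlgebra.ad k L x) ^ p) y

variable {p k L}

/-- The (restricted) nullcone `V(g) = {x | x^[p] = 0}`. -/
def pStructure.null (P : pStructure p k L) : Set L := {x | P.pmap x = 0}

/-- A submodule is an elementary abelian subalgebra if it is abelian (hence a subalgebra) and
the `p`-map vanishes on it. -/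
def pStructure.IsElemAbelian (P : pStructure p k L) (e : Submodule k L) : Prop :=
  (∀ x ∈ e, ∀ y ∈ e, ⁅x, y⁆ = (0 : L)) ∧ ∀ x ∈ e, P.pmap x = 0

/-- `E(r, g)`: the `r`-dimensional elementary abelian subalgebras contained in the carrier
set `g` (take `g = Set.univ` for the whole algebra), as a set of submodules. -/
def pStructure.elemSet (P : pStructure p k L) (g : Set L) (r : ℕ) : Set (Submodule k L) :=
  {e | (e : Set L) ⊆ g ∧ Module.finrank k ↥e = r ∧ P.IsElemAbelian e}

/-- Pairs of linearly independent vectors spanning a member of a given collection `C` of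
two-dimensional subspaces. -/
def planePairs (C : Set (Submodule k L)) : Set (L × L) :=
  {z | LinearIndependent k ![z.1, z.2] ∧ Submodule.span k (Set.range ![z.1, z.2]) ∈ C}

/-- The canonical (quotient) map from spanning pairs to planes. -/
def planeMk (C : Set (Submodule k L)) (z : planePairs C) : ↥C :=
  ⟨Submodule.span k (Set.range ![z.val.1, z.val.2]), z.prop.2⟩

/-- The Zariski topology on a collection of two-dimensional subspaces (e.g. `E(2,g)` or
`Gr₂(g)^{V(g)}`), defined as the quotient topology induced from the Zariski topology on the
variety of spanning pairs. -/
def planeTop (C : Set (Submodule k L)) : TopologicalSpace ↥C :=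
  TopologicalSpace.coinduced (planeMk C)
    (TopologicalSpace.induced Subtype.val (zar k (L × L)))

/-- The statement that the projective variety `E(2, g)` is connected (the empty space counts
as connected). -/
def pStructure.EIsConnected (P : pStructure p k L) (g : Set L) : Prop :=
  @IsPreconnected ↥(P.elemSet g 2) (planeTop (P.elemSet g 2)) Set.univ

/-- `N_i(g) = {x | (ad x)^i = 0}`. -/
def Ncal (i : ℕ) : Set L := {x | (LieAlgebra.ad k L x) ^ i = 0}

/-- The truncated exponential `exp x = ∑_{i<p} (ad x)^i / i!`. -/
def expAd (x : L) : Module.End k L :=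
  ∑ i ∈ Finset.range p, (i.factorial : k)⁻¹ • ((LieAlgebra.ad k L x) ^ i)

/-- Automorphisms of the Lie algebra `L` (as linear endomorphisms). -/
def IsLieAut (f : Module.End k L) : Prop :=
  Function.Bijective f ∧ ∀ x y : L, f ⁅x, y⁆ = ⁅f x, f y⁆

/-- Automorphisms of the restricted Lie algebra `(L, [p])`, i.e. automorphisms commuting with
the `p`-map (the group `Aut_p(g)`). -/
def pStructure.IspAut (P : pStructure p k L) (f : Module.End k L) : Prop :=
  IsLieAut f ∧ ∀ x : L, f (P.pmap x) = P.pmap (f x)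

/-- A restricted Lie algebra is admissible if `N₃(g) ⊆ V(g)` and `exp(N₃(g)) ⊆ Aut_p(g)`. -/
def pStructure.IsAdmissible (P : pStructure p k L) : Prop :=
  Ncal (k := k) 3 ⊆ P.null ∧ ∀ x ∈ Ncal (k := k) (L := L) 3, P.IspAut (expAd (p := p) x)


section Classical

variable (k L) [FiniteDimensional k L]

/-- The root space (eigenspace of the adjoint action) of a subalgebra `H` for the linear
form `α` on `H`. -/
def rootSp (H : LieSubalgebra k L) (α : Module.Dual k ↥H) : Submodule k L where
  carrier := {x | ∀ h : ↥H, ⁅(h : L), x⁆ = α h • x}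
  add_mem' := by
    intro a b ha hb h
    rw [lie_add, ha h, hb h, smul_add]
  zero_mem' := by intro h; simp
  smul_mem' := by
    intro c x hx h
    rw [lie_smul, hx h, smul_comm]

/-- Seligman's axiomatic characterization of the classical (semi-)simple Lie algebras in
characteristic `p ≥ 3`:  trivial center, perfectness, and the existence of an abelian Cartan
subalgebra `H` giving a root space decomposition with one-dimensional root spaces
`g_α` (`α ≠ 0`), with `[g_α, g_{-α}]` one-dimensional and with proper root strings. -/
def IsClassicalLie : Prop :=
  LieAlgebra.center k L = ⊥ ∧
  ⁅(⊤ : LieIdeal k L), (⊤ : LieIdeal k L)⁆ = ⊤ ∧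
  ∃ H : LieSubalgebra k L, H.IsCartanSubalgebra ∧ IsLieAbelian ↥H ∧
    (⨆ α : Module.Dual k ↥H, rootSp k L H α) = ⊤ ∧
    (∀ α : Module.Dual k ↥H, α ≠ 0 → rootSp k L H α ≠ ⊥ →
      Module.finrank k ↥(rootSp k L H α) = 1) ∧
    (∀ α : Module.Dual k ↥H, α ≠ 0 → rootSp k L H α ≠ ⊥ →
      Module.finrank k ↥(Submodule.span k
        {z : L | ∃ x ∈ rootSp k L H α, ∃ y ∈ rootSp k L H (-α), ⁅x, y⁆ = z}) = 1) ∧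
    (∀ α : Module.Dual k ↥H, α ≠ 0 → rootSp k L H α ≠ ⊥ →
      ∀ β : Module.Dual k ↥H, rootSp k L H β ≠ ⊥ →
        ∃ n : ℕ, rootSp k L H (β + n • α) = ⊥)

/-- A Lie algebra is classical semisimple if it is the direct sum of ideals each of which is
a simple Lie algebra of classical type. -/
def IsClassicalSemisimple : Prop :=
  ∃ (ι : Type) (_ : Fintype ι) (I : ι → LieIdeal k L),
    (∀ i, LieAlgebra.IsSimple k ↥(I i) ∧ IsClassicalLie k ↥(I i)) ∧
    iSupIndep I ∧ iSup I = ⊤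

end Classical

/-- `g` is almost classical semisimple: there is a classical semisimple Lie algebra `M`
with `ad M ⊆ g ⊆ Der M`, i.e. `g` embeds into the derivation algebra of `M` with image
containing all inner derivations. -/
def IsAlmostClassicalSemisimple (k L : Type) [Field k] [LieRing L] [LieAlgebra k L] : Prop :=
  ∃ (M : Type) (_ : LieRing M) (_ : LieAlgebra k M) (_ : FiniteDimensional k M),
    IsClassicalSemisimple k M ∧
    ∃ φ : L →ₗ⁅k⁆ LieDerivation k M M,
      Function.Injective φ ∧ ∀ m : M, LieDerivation.ad k M m ∈ Set.range φ

end ElemAb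

theorem cast_choose_prime_sub_one {R : Type*} [Ring R] (p : ℕ) [CharP R p] (hp : p.Prime) (m : ℕ)
    (hm : m < p) : (((p - 1).choose m : ℕ) : R) = (-1) ^ m := by
  induction m with
  | zero => simp
  | succ m ih =>
    have h1 : ((p.choose (m + 1) : ℕ) : R) = 0 :=
      (CharP.cast_eq_zero_iff R p _).2 (hp.dvd_choose_self (by omega) hm)
    obtain ⟨q, rfl⟩ : ∃ q, p = q + 1 := ⟨p - 1, by have := hp.pos; omega⟩
    rw [Nat.choose_succ_succ, Nat.cast_add] at h1
    simp only [Nat.add_sub_cancel] at ih ⊢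
    rw [eq_neg_of_add_eq_zero_right h1, ih (by omega), pow_succ]
    simp

theorem Commute.sub_pow_prime_sub_one {R : Type*} [Ring R] {p : ℕ} [CharP R p] (hp : p.Prime)
    (hp3 : 3 ≤ p) {x y : R} (h : Commute x y) :
    (x - y) ^ (p - 1) = ∑ i ∈ Finset.range p, x ^ i * y ^ (p - 1 - i) := by
  have hp1 : p - 1 + 1 = p := by omega
  rw [sub_eq_add_neg, (h.neg_right).add_pow, hp1]
  refine Finset.sum_congr rfl fun i hi => ?_
  have hi := Finset.mem_range.1 hi
  have hev : Even (p - 1) := by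
    have := hp.even_sub_one (by omega)
    exact this
  rw [cast_choose_prime_sub_one p hp i hi, neg_pow, mul_assoc, mul_assoc,
    (Commute.neg_one_left (y ^ (p - 1 - i))).pow_left i |>.eq.symm, ← mul_assoc ((-1) ^ _),
    ← pow_add, Nat.sub_add_cancel (by omega), hev.neg_one_pow, one_mul]

open Polynomial in
/-- Jacobson's formula for `p`-th powers, modulo a subspace `J` containing `[a, b]` and stable under
commutation with `a` and `b`. -/
theorem add_pow_char_sub_mem {k A : Type*} [Field k] [Ring A] [Algebra k A] {p : ℕ} [CharP k p]
    (hp : p.Prime) (hp3 : 3 ≤ p) (J : Submodule k A) {a b : A} (hab : b * a - a * b ∈ J)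
    (ha : ∀ c ∈ J, a * c - c * a ∈ J) (hb : ∀ c ∈ J, b * c - c * b ∈ J) :
    (a + b) ^ p - a ^ p - b ^ p ∈ J := by
  rcases subsingleton_or_nontrivial A with hA | hA
  · rw [Subsingleton.elim ((a + b) ^ p - a ^ p - b ^ p) 0]; exact J.zero_mem
  have : CharP A p := charP_of_injective_algebraMap (algebraMap k A).injective p
  set g : A[X] := C a * X + C b with hg
  have hder : ∀ n, derivative (g ^ n) = ∑ i ∈ Finset.range n, g ^ i * C a * g ^ (n - 1 - i) := by
    intro n
    induction n with
    | zero => simp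
    | succ n ih =>
      rw [pow_succ, derivative_mul, ih, Finset.sum_range_succ, Finset.sum_mul]
      congr 1
      · refine Finset.sum_congr rfl fun i hi => ?_
        have := Finset.mem_range.1 hi
        rw [mul_assoc, ← pow_succ]
        congr 2; omega
      · simp [hg]
  let l : Module.End k A[X] := LinearMap.mulLeft k g
  let r : Module.End k A[X] := LinearMap.mulRight k g
  have hlr : Commute l r := by ext q : 1; simp [l, r, mul_assoc]
  have : CharP (Module.End k A[X]) p :=
    charP_of_injective_algebraMap (algebraMap k (Module.End k A[X])).injective p
  have hder' : derivative (g ^ p) = ((l - r) ^ (p - 1)) (C a) := by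
    rw [hder, hlr.sub_pow_prime_sub_one hp hp3, LinearMap.sum_apply]
    refine Finset.sum_congr rfl fun i _ => ?_
    simp [l, r, LinearMap.pow_mulLeft, LinearMap.pow_mulRight, mul_assoc]
  have hcoeff : ∀ n j, (((l - r) ^ (n + 1)) (C a)).coeff j ∈ J := by
    intro n
    induction n with
    | zero =>
      intro j
      have : ((l - r) ^ (0 + 1)) (C a) = C (b * a - a * b) := by
        simp [l, r, hg, add_mul, mul_add, mul_assoc, X_mul_C]
      rw [this, coeff_C]
      split_ifs
      · exact hab
      · exact J.zero_mem
    | succ n ih =>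
      intro j
      rw [pow_succ', Module.End.mul_apply]
      generalize ((l - r) ^ (n + 1)) (C a) = q at ih
      have : (l - r) q = (C a * q - q * C a) * X + (C b * q - q * C b) := by
        simp only [l, r, hg, LinearMap.sub_apply, LinearMap.mulLeft_apply,
          LinearMap.mulRight_apply, add_mul, mul_add, sub_mul, mul_assoc, X_mul]
        abel
      rw [this, coeff_add]
      refine J.add_mem ?_ ?_
      · cases j with
        | zero => simp
        | succ j => rw [coeff_mul_X]; simpa using ha _ (ih j)
      · simpa using hb _ (ih j)
  have hpc : ∀ i, 0 < i → i < p → (g ^ p).coeff i ∈ J := by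
    intro i h0 hi
    obtain ⟨i, rfl⟩ : ∃ j, i = j + 1 := ⟨i - 1, by omega⟩
    have h1 : (derivative (g ^ p)).coeff i ∈ J := by
      rw [hder', show p - 1 = (p - 2) + 1 by omega]
      exact hcoeff _ _
    rw [coeff_derivative] at h1
    have h2 : ((i + 1 : ℕ) : k) ≠ 0 := by
      rw [Ne, CharP.cast_eq_zero_iff k p]
      exact Nat.not_dvd_of_pos_of_lt h0 hi
    have h3 : (g ^ p).coeff (i + 1) * ((i : A) + 1) =
        ((i + 1 : ℕ) : k) • (g ^ p).coeff (i + 1) := by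
      rw [Algebra.smul_def, Algebra.commutes]; simp
    rw [h3] at h1
    exact (J.smul_mem_iff h2).1 h1
  have hdeg : g.natDegree ≤ 1 := by
    rw [hg]; compute_degree
  have hdegp : (g ^ p).natDegree < p + 1 := by
    have := natDegree_pow_le_of_le p hdeg
    omega
  let ev : A[X] →+* A := eval₂RingHom' (RingHom.id A) 1 (fun _ => Commute.one_right _)
  have hev : ev (g ^ p) = (a + b) ^ p := by
    rw [map_pow]; congr 1; simp [ev, hg]
  have hev' : ev (g ^ p) = ∑ i ∈ Finset.range (p + 1), (g ^ p).coeff i := by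
    change eval₂ (RingHom.id A) 1 (g ^ p) = _
    rw [eval₂_eq_sum_range' _ hdegp]; simp
  have hcp : (g ^ p).coeff p = a ^ p := by
    have := coeff_pow_of_natDegree_le (m := p) hdeg
    rw [mul_one] at this
    rw [this]; simp [hg]
  have hc0 : (g ^ p).coeff 0 = b ^ p := by
    change constantCoeff (g ^ p) = _
    rw [map_pow]; simp [hg]
  rw [← hev, hev', Finset.sum_range_succ, hcp, add_sub_cancel_right]
  obtain ⟨q, rfl⟩ : ∃ q, p = q + 1 := ⟨p - 1, by omega⟩
  rw [Finset.sum_range_succ', hc0, add_sub_cancel_right]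
  refine J.sum_mem fun i hi => hpc _ (by omega) ?_
  have := Finset.mem_range.1 hi
  omega

namespace ElemAb

variable {k L : Type} [Field k] [LieRing L] [LieAlgebra k L] {H : LieSubalgebra k L}

theorem lie_mem_rootSp {α β : Module.Dual k H} {x y : L} (hx : x ∈ rootSp k L H α)
    (hy : y ∈ rootSp k L H β) : ⁅x, y⁆ ∈ rootSp k L H (α + β) := by
  intro h
  rw [leibniz_lie, hx h, hy h]
  simp [add_smul]

theorem mem_rootSp_zero [H.IsCartanSubalgebra] [IsLieAbelian H] {x : L} :
    x ∈ rootSp k L H 0 ↔ x ∈ H := by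
  constructor
  · intro hx
    rw [← LieSubalgebra.IsCartanSubalgebra.self_normalizing (H := H),
      LieSubalgebra.mem_normalizer_iff']
    intro y hy
    have := hx ⟨y, hy⟩
    simp only [LinearMap.zero_apply, zero_smul] at this
    rw [this]
    exact H.zero_mem
  · intro hx h
    have := congrArg Subtype.val (trivial_lie_zero H H h ⟨x, hx⟩)
    simpa using this

theorem iSupIndep_rootSp [IsLieAbelian H] : iSupIndep (rootSp k L H) := by
  have h1 := Module.End.independent_iInf_maxGenEigenspace_of_forall_mapsTo
    (fun h : H => LieAlgebra.ad k L (h : L)) fun i j φ => by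
      refine Module.End.mapsTo_maxGenEigenspace_of_comm ?_ φ
      ext x
      have := congrArg Subtype.val (trivial_lie_zero H H j i)
      have h2 : ⁅(j : L), (i : L)⁆ = 0 := by simpa using this
      have h3 := leibniz_lie (j : L) (i : L) x
      rw [h2, zero_lie, zero_add] at h3
      simpa using h3
  have h2 := h1.comp (f := fun α : Module.Dual k H => (α : H → k)) DFunLike.coe_injective
  refine h2.mono fun α x hx => ?_
  simp only [Function.comp_apply, Submodule.mem_iInf]
  intro h
  refine Module.End.mem_maxGenEigenspace _ _ _ |>.2 ⟨1, ?_⟩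
  simp [hx h]

/-- A Cartan subalgebra witnessing that a Lie algebra is of classical type. -/
structure IsClassicalCartan (H : LieSubalgebra k L) : Prop where
  cartan : H.IsCartanSubalgebra
  abelian : IsLieAbelian H
  center_eq : LieAlgebra.center k L = ⊥
  perfect : ⁅(⊤ : LieIdeal k L), (⊤ : LieIdeal k L)⁆ = ⊤
  iSup_eq : ⨆ α, rootSp k L H α = ⊤
  finrank_eq : ∀ α : Module.Dual k H, α ≠ 0 → rootSp k L H α ≠ ⊥ →
    Module.finrank k (rootSp k L H α) = 1
  string : ∀ α : Module.Dual k H, α ≠ 0 → rootSp k L H α ≠ ⊥ →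
    ∀ β : Module.Dual k H, rootSp k L H β ≠ ⊥ → ∃ n : ℕ, rootSp k L H (β + n • α) = ⊥

namespace IsClassicalCartan

theorem ext_rootSp (hH : IsClassicalCartan H) {f g : Module.End k L}
    (hfg : ∀ α, ∀ x ∈ rootSp k L H α, f x = g x) : f = g := by
  have : (⨆ α, rootSp k L H α) ≤ LinearMap.eqLocus f g := iSup_le fun α x hx => hfg α x hx
  rw [hH.iSup_eq] at this
  ext x
  exact this (Submodule.mem_top : x ∈ ⊤)

theorem mem_zero (hH : IsClassicalCartan H) {x : L} : x ∈ rootSp k L H 0 ↔ x ∈ H := by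
  have := hH.cartan
  have := hH.abelian
  exact mem_rootSp_zero

theorem eq_zero_of_central (hH : IsClassicalCartan H) {z : L}
    (hz : ∀ y : L, ⁅z, y⁆ = 0) : z = 0 := by
  have : z ∈ LieAlgebra.center k L := by
    rw [LieModule.mem_maxTrivSubmodule]
    intro y
    rw [← lie_skew, hz, neg_zero]
  rwa [hH.center_eq, LieSubmodule.mem_bot] at this

theorem eq_zero_of_forall_root (hH : IsClassicalCartan H) {h : H}
    (hz : ∀ α : Module.Dual k H, α ≠ 0 → rootSp k L H α ≠ ⊥ → α h = 0) : (h : L) = 0 := by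
  refine hH.eq_zero_of_central fun y => ?_
  have : LieAlgebra.ad k L (h : L) = 0 := hH.ext_rootSp fun α x hx => by
    rw [LieAlgebra.ad_apply, hx h, LinearMap.zero_apply]
    by_cases hα : α = 0
    · simp [hα]
    by_cases hb : rootSp k L H α = ⊥
    · rw [hb, Submodule.mem_bot] at hx; simp [hx]
    rw [hz α hα hb, zero_smul]
  exact LinearMap.congr_fun this y

theorem eq_smul_of_sq [FiniteDimensional k L] (hH : IsClassicalCartan H) {h : H} {μ : k} {y : L}
    (hy : ⁅(h : L), ⁅(h : L), y⁆ - μ • y⁆ = μ • (⁅(h : L), y⁆ - μ • y)) : ⁅(h : L), y⁆ = μ • y := by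
  set g : Module.End k L := LieAlgebra.ad k L (h : L) - algebraMap k _ μ with hg
  have hgx : ∀ x, g x = ⁅(h : L), x⁆ - μ • x := fun x => by simp [hg]
  have hr : LinearMap.range g ≤ LinearMap.range (g * g) := by
    rw [LinearMap.range_eq_map, ← hH.iSup_eq, Submodule.map_iSup]
    refine iSup_le fun α => ?_
    rintro _ ⟨x, hx, rfl⟩
    have h1 : g x = (α h - μ) • x := by rw [hgx, hx h, sub_smul]
    by_cases h0 : α h - μ = 0
    · rw [h1, h0, zero_smul]; exact Submodule.zero_mem _
    · refine ⟨(α h - μ)⁻¹ • x, ?_⟩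
      rw [Module.End.mul_apply, map_smul g, h1, smul_smul, inv_mul_cancel₀ h0, one_smul, h1]
  have hk : LinearMap.ker g = LinearMap.ker (g * g) := by
    have hle : LinearMap.ker g ≤ LinearMap.ker (g * g) := LinearMap.ker_le_ker_comp g g
    refine Submodule.eq_of_le_of_finrank_le hle ?_
    have e1 := LinearMap.finrank_range_add_finrank_ker g
    have e2 := LinearMap.finrank_range_add_finrank_ker (g * g)
    have e3 := Submodule.finrank_mono hr
    omega
  have : y ∈ LinearMap.ker g := by
    rw [hk, LinearMap.mem_ker, Module.End.mul_apply, hgx, hgx, hy, sub_self]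
  rw [LinearMap.mem_ker, hgx] at this
  exact sub_eq_zero.1 this

theorem exists_regular [FiniteDimensional k L] (hH : IsClassicalCartan H) [Infinite k] :
    ∃ h : H, ∀ α : Module.Dual k H, α ≠ 0 → rootSp k L H α ≠ ⊥ → α h ≠ 0 := by
  have := hH.abelian
  have hfin : {α : Module.Dual k H | rootSp k L H α ≠ ⊥}.Finite :=
    WellFoundedGT.finite_ne_bot_of_iSupIndep iSupIndep_rootSp
  have : Finite {α : Module.Dual k H // α ≠ 0 ∧ rootSp k L H α ≠ ⊥} :=
    (hfin.subset fun α h => h.2).to_subtype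
  obtain ⟨h, hh⟩ := Module.Dual.exists_forall_ne_zero_of_forall_exists
    (fun α : {α : Module.Dual k H // α ≠ 0 ∧ rootSp k L H α ≠ ⊥} => α.1) fun α => by
      by_contra! hc
      exact α.2.1 (LinearMap.ext hc)
  exact ⟨h, fun α h1 h2 => hh ⟨α, h1, h2⟩⟩

end IsClassicalCartan

/-- A derivation is toral with respect to `H` if it kills `H` and preserves all root spaces. -/
def IsToral (H : LieSubalgebra k L) (T : LieDerivation k L L) : Prop :=
  (∀ h ∈ H, T h = 0) ∧ ∀ α, ∀ x ∈ rootSp k L H α, T x ∈ rootSp k L H α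

namespace IsClassicalCartan

theorem isToral_of_mapsTo [FiniteDimensional k L] (hH : IsClassicalCartan H)
    {D : LieDerivation k L L} (hD : ∀ h ∈ H, D h ∈ H) : IsToral H D := by
  have key : ∀ α, ∀ x ∈ rootSp k L H α, ∀ h : H,
      ⁅(h : L), D x⁆ = α h • D x - α ⟨D h, hD h h.2⟩ • x := fun α x hx h => by
    have h1 := D.apply_lie_eq_add (h : L) x
    have h2 := hx ⟨D h, hD h h.2⟩
    simp only at h2
    rw [hx h, map_smul, h2] at h1
    rw [h1]; abel
  have key2 : ∀ α, ∀ x ∈ rootSp k L H α, ∀ h : H, ⁅(h : L), D x⁆ = α h • D x :=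
    fun α x hx h => by
      refine hH.eq_smul_of_sq ?_
      rw [key α x hx h]
      simp [hx h, smul_comm (α h)]
  refine ⟨fun h hh => ?_, fun α x hx h => key2 α x hx h⟩
  refine hH.eq_zero_of_forall_root (h := ⟨D h, hD h hh⟩) fun α _ hb => ?_
  obtain ⟨x, hx, hx0⟩ := Submodule.exists_mem_ne_zero_of_ne_bot hb
  have h1 := key α x hx ⟨h, hh⟩
  rw [key2 α x hx ⟨h, hh⟩] at h1
  have h2 : α ⟨D h, hD h hh⟩ • x = 0 := by simpa using h1.symm
  exact (smul_eq_zero.1 h2).resolve_right hx0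

theorem exists_ad_add_toral [FiniteDimensional k L] (hH : IsClassicalCartan H) [Infinite k]
    (D : LieDerivation k L L) :
    ∃ m T, D = LieDerivation.ad k L m + T ∧ IsToral H T := by
  obtain ⟨h₀, hreg⟩ := hH.exists_regular
  have hsum : ∀ y : L, ∃ u ∈ H, ∃ z, y = u + ⁅(h₀ : L), z⁆ := by
    have : (⊤ : Submodule k L) ≤ H.toSubmodule ⊔ LinearMap.range (LieAlgebra.ad k L (h₀ : L)) := by
      rw [← hH.iSup_eq]
      refine iSup_le fun α x hx => ?_
      by_cases hα : α = 0
      · subst hα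
        exact Submodule.mem_sup_left (hH.mem_zero.1 hx)
      by_cases hb : rootSp k L H α = ⊥
      · rw [hb, Submodule.mem_bot] at hx
        rw [hx]; exact Submodule.zero_mem _
      refine Submodule.mem_sup_right ⟨(α h₀)⁻¹ • x, ?_⟩
      rw [LieAlgebra.ad_apply, lie_smul, hx h₀, smul_smul, inv_mul_cancel₀ (hreg α hα hb), one_smul]
    intro y
    obtain ⟨u, hu, _, ⟨z, rfl⟩, h⟩ := Submodule.mem_sup.1 (this (Submodule.mem_top : y ∈ ⊤))
    exact ⟨u, hu, z, h.symm⟩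
  have hker : ∀ y : L, ⁅(h₀ : L), y⁆ = 0 → y ∈ H := by
    intro y hy
    obtain ⟨u, hu, z, rfl⟩ := hsum y
    have hu0 : ⁅(h₀ : L), u⁆ = 0 := by
      simpa using hH.mem_zero.2 hu h₀
    rw [lie_add, hu0, zero_add] at hy
    have := hH.eq_smul_of_sq (h := h₀) (μ := 0) (y := z) (by simpa using hy)
    rw [this]; simpa using hu
  obtain ⟨u, hu, z, hz⟩ := hsum (D h₀)
  refine ⟨-z, D + LieDerivation.ad k L z, ?_, ?_⟩
  · rw [map_neg]; abel
  refine hH.isToral_of_mapsTo fun h hh => hker _ ?_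
  set E := D + LieDerivation.ad k L z with hE
  have hE0 : E h₀ = u := by
    rw [hE, LieDerivation.add_apply, hz, LieDerivation.ad_apply_apply, ← lie_skew (h₀ : L) z]
    abel
  have h0h : ⁅(h₀ : L), h⁆ = 0 := by simpa using hH.mem_zero.2 hh h₀
  have huh : ⁅u, h⁆ = 0 := by simpa using hH.mem_zero.2 hh ⟨u, hu⟩
  have := E.apply_lie_eq_add (h₀ : L) h
  rw [h0h, hE0, huh, map_zero, add_zero] at this
  exact this.symm

theorem exists_smul_of_isToral (hH : IsClassicalCartan H) {T : LieDerivation k L L}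
    (hT : IsToral H T) (α : Module.Dual k H) :
    ∃ c : k, (α = 0 → c = 0) ∧ ∀ x ∈ rootSp k L H α, T x = c • x := by
  by_cases hα : α = 0
  · subst hα
    exact ⟨0, fun _ => rfl, fun x hx => by rw [hT.1 x (hH.mem_zero.1 hx), zero_smul]⟩
  by_cases hb : rootSp k L H α = ⊥
  · refine ⟨0, fun _ => rfl, fun x hx => ?_⟩
    rw [hb, Submodule.mem_bot] at hx; simp [hx]
  obtain ⟨v, hv0, hv⟩ := finrank_eq_one_iff'.1 (hH.finrank_eq α hα hb)
  obtain ⟨c, hc⟩ := hv ⟨T v, hT.2 α v v.2⟩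
  refine ⟨c, fun h => absurd h hα, fun x hx => ?_⟩
  obtain ⟨d, hd⟩ := hv ⟨x, hx⟩
  have hc' : c • (v : L) = T v := congrArg Subtype.val hc
  have hd' : d • (v : L) = x := congrArg Subtype.val hd
  rw [← hd', map_smul, ← hc', smul_comm]

theorem lie_toral_eq_zero (hH : IsClassicalCartan H) {T T' : LieDerivation k L L}
    (hT : IsToral H T) (hT' : IsToral H T') :
    ⁅T, T'⁆ = 0 := by
  have : (⁅T, T'⁆ : LieDerivation k L L).toLinearMap = (0 : Module.End k L) :=
    hH.ext_rootSp fun α x hx => by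
      obtain ⟨c, -, hc⟩ := hH.exists_smul_of_isToral hT α
      obtain ⟨c', -, hc'⟩ := hH.exists_smul_of_isToral hT' α
      change ⁅T, T'⁆ x = 0
      rw [LieDerivation.commutator_apply, hc x hx, hc' x hx, map_smul, map_smul, hc x hx,
        hc' x hx, smul_comm, sub_self]
  ext x
  exact LinearMap.congr_fun this x

end IsClassicalCartan

end ElemAb

namespace ElemAb

variable {p : ℕ} {k L : Type} [Field k] [LieRing L] [LieAlgebra k L] {H : LieSubalgebra k L}

theorem cast_pow_char (hp : p.Prime) [CharP k p] (n : ℕ) : (n : k) ^ p = n := by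
  have := Fact.mk hp
  rw [← frobenius_def, map_natCast]

theorem char_nsmul_eq_zero [CharP k p] {V : Type*} [AddCommGroup V] [Module k V] (v : V) :
    p • v = 0 := by
  rw [← Nat.cast_smul_eq_nsmul k, CharP.cast_eq_zero, zero_smul]

variable (k L) in
/-- The space of inner derivations, inside the linear endomorphisms. -/
def innerEnd : Submodule k (Module.End k L) :=
  LinearMap.range (LieAlgebra.ad k L : L →ₗ[k] Module.End k L)

theorem mem_innerEnd {f : Module.End k L} : f ∈ innerEnd k L ↔ ∃ m : L, ∀ x, f x = ⁅m, x⁆ :=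
  ⟨fun ⟨m, hm⟩ => ⟨m, fun x => by rw [← hm]; rfl⟩,
    fun ⟨m, hm⟩ => ⟨m, LinearMap.ext fun x => (hm x).symm⟩⟩

theorem ad_mem_innerEnd (m : L) : LieAlgebra.ad k L m ∈ innerEnd k L := ⟨m, rfl⟩

theorem commutator_mem_innerEnd (D : LieDerivation k L L) {f : Module.End k L}
    (hf : f ∈ innerEnd k L) :
    (D.toLinearMap : Module.End k L) * f - f * D.toLinearMap ∈ innerEnd k L := by
  obtain ⟨m, hm⟩ := mem_innerEnd.1 hf
  refine mem_innerEnd.2 ⟨D m, fun x => ?_⟩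
  change D (f x) - f (D x) = _
  rw [hm, hm, D.apply_lie_eq_add]
  abel

theorem ad_add_pow_sub_mem (hp : p.Prime) (hp3 : 3 ≤ p) [CharP k p] (m : L)
    (D : LieDerivation k L L) :
    (LieAlgebra.ad k L m + D.toLinearMap) ^ p - LieAlgebra.ad k L m ^ p - D.toLinearMap ^ p ∈
      innerEnd k L := by
  refine add_pow_char_sub_mem hp hp3 _ (commutator_mem_innerEnd D (ad_mem_innerEnd m))
    (fun c hc => ?_) (fun c hc => commutator_mem_innerEnd D hc)
  have := commutator_mem_innerEnd (LieDerivation.ad k L m) hc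
  rwa [LieDerivation.coe_ad_apply_eq_ad_apply] at this

namespace IsClassicalCartan

theorem eq_top_of_rootSp_le (hH : IsClassicalCartan H) {S : Submodule k L}
    (h1 : ∀ α ≠ 0, rootSp k L H α ≤ S)
    (h2 : ∀ α ≠ 0, ∀ x ∈ rootSp k L H α, ∀ y ∈ rootSp k L H (-α), ⁅x, y⁆ ∈ S) : S = ⊤ := by
  have hxy : ∀ x y : L, ⁅x, y⁆ ∈ S := by
    intro x y
    have hx : x ∈ ⨆ α, rootSp k L H α := hH.iSup_eq ▸ Submodule.mem_top
    have hy : y ∈ ⨆ α, rootSp k L H α := hH.iSup_eq ▸ Submodule.mem_top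
    induction hx using Submodule.iSup_induction' with
    | zero => simp
    | add a b _ _ ha hb => rw [add_lie]; exact S.add_mem ha hb
    | mem α a ha =>
      induction hy using Submodule.iSup_induction' with
      | zero => simp
      | add c d _ _ hc hd => rw [lie_add]; exact S.add_mem hc hd
      | mem β b hb =>
        by_cases hαβ : α + β = 0
        · obtain rfl : β = -α := (neg_eq_of_add_eq_zero_right hαβ).symm
          by_cases hα : α = 0
          · subst hα
            have := hb ⟨a, hH.mem_zero.1 ha⟩
            simp only [neg_zero, LinearMap.zero_apply, zero_smul] at this
            rw [this]; exact S.zero_mem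
          · exact h2 α hα a ha b hb
        · exact h1 _ hαβ (lie_mem_rootSp ha hb)
  rw [eq_top_iff]
  have hp := congrArg LieSubmodule.toSubmodule hH.perfect
  rw [LieSubmodule.lieIdeal_oper_eq_linear_span', LieSubmodule.top_toSubmodule] at hp
  rw [← hp, Submodule.span_le]
  rintro _ ⟨x, -, y, -, rfl⟩
  exact hxy x y

theorem string_lt (hp : p.Prime) [CharP k p] (hH : IsClassicalCartan H) {α β : Module.Dual k H}
    (hα : α ≠ 0) (hαb : rootSp k L H α ≠ ⊥) (hβ : rootSp k L H β ≠ ⊥) :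
    ∃ n < p, rootSp k L H (β + n • α) = ⊥ := by
  obtain ⟨n, hn⟩ := hH.string α hα hαb β hβ
  refine ⟨n % p, Nat.mod_lt _ hp.pos, ?_⟩
  rw [← hn, ← Nat.mod_add_div n p]
  simp only [Nat.add_mod, Nat.mul_mod_right, add_zero, Nat.mod_mod, add_smul, mul_smul]
  rw [char_nsmul_eq_zero (k := k), add_zero]

theorem exists_generator (hH : IsClassicalCartan H) {γ : Module.Dual k H} (hγ : γ ≠ 0) :
    ∃ v ∈ rootSp k L H γ, ∀ z ∈ rootSp k L H γ, ∃ c : k, (v = 0 → c = 0) ∧ z = c • v := by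
  by_cases hb : rootSp k L H γ = ⊥
  · refine ⟨0, Submodule.zero_mem _, fun z hz => ⟨0, fun _ => rfl, ?_⟩⟩
    rw [hb, Submodule.mem_bot] at hz
    simp [hz]
  obtain ⟨v, hv0, hv⟩ := finrank_eq_one_iff'.1 (hH.finrank_eq γ hγ hb)
  refine ⟨v, v.2, fun z hz => ?_⟩
  obtain ⟨c, hc⟩ := hv ⟨z, hz⟩
  exact ⟨c, fun h => absurd (Subtype.ext h) hv0, (congrArg Subtype.val hc).symm⟩

/-- For a root `α` and `h ∈ [L_α, L_{-α}]`, the value `β h` of any weight `β` is a multiple of `α h`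
by an element of the prime field: the trace of `h` on the `α`-string through `β` vanishes. -/
theorem exists_eq_mul (hp : p.Prime) [CharP k p] (hH : IsClassicalCartan H) {α β : Module.Dual k H}
    (hα : α ≠ 0) (hαb : rootSp k L H α ≠ ⊥) (hβ : rootSp k L H β ≠ ⊥) {x y : L}
    (hx : x ∈ rootSp k L H α) (hy : y ∈ rootSp k L H (-α)) {h : H} (hh : (h : L) = ⁅x, y⁆) :
    ∃ c : k, c ^ p = c ∧ β h = c * α h := by
  classical
  by_cases h0 : ∃ i : ℕ, β + i • α = 0
  · obtain ⟨i, hi⟩ := h0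
    obtain ⟨j, hj⟩ : ∃ j : ℕ, (j : k) = -i := by
      refine ⟨(p - 1) * i, ?_⟩
      rw [Nat.cast_mul, Nat.cast_sub hp.one_le, CharP.cast_eq_zero]; simp
    refine ⟨j, cast_pow_char hp j, ?_⟩
    have := LinearMap.congr_fun hi h
    simp only [LinearMap.add_apply, LinearMap.smul_apply, LinearMap.zero_apply,
      nsmul_eq_mul] at this
    rw [hj]
    linear_combination this
  push Not at h0
  have hV : ∀ γ : Module.Dual k H, ∃ v : L, γ ≠ 0 → v ∈ rootSp k L H γ ∧
      ∀ z ∈ rootSp k L H γ, ∃ c : k, (v = 0 → c = 0) ∧ z = c • v := fun γ => by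
    by_cases hγ : γ = 0
    · exact ⟨0, fun h => absurd hγ h⟩
    · obtain ⟨v, hv⟩ := hH.exists_generator hγ
      exact ⟨v, fun _ => hv⟩
  choose V hV using hV
  have hA : ∀ γ : Module.Dual k H, ∃ a : k, γ ≠ 0 → γ + α ≠ 0 →
      (V (γ + α) = 0 → a = 0) ∧ ⁅x, V γ⁆ = a • V (γ + α) := fun γ => by
    by_cases hγ : γ ≠ 0 ∧ γ + α ≠ 0
    · obtain ⟨c, hc⟩ := (hV (γ + α) hγ.2).2 ⁅x, V γ⁆ (by
        rw [add_comm]; exact lie_mem_rootSp hx (hV γ hγ.1).1)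
      exact ⟨c, fun _ _ => hc⟩
    · exact ⟨0, fun h1 h2 => absurd ⟨h1, h2⟩ hγ⟩
  have hB : ∀ γ : Module.Dual k H, ∃ b : k, γ ≠ 0 → γ + α ≠ 0 →
      (V γ = 0 → b = 0) ∧ ⁅y, V (γ + α)⁆ = b • V γ := fun γ => by
    by_cases hγ : γ ≠ 0 ∧ γ + α ≠ 0
    · obtain ⟨c, hc⟩ := (hV γ hγ.1).2 ⁅y, V (γ + α)⁆ (by
        have := lie_mem_rootSp hy (hV (γ + α) hγ.2).1
        rwa [show -α + (γ + α) = γ by abel] at this)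
      exact ⟨c, fun _ _ => hc⟩
    · exact ⟨0, fun h1 h2 => absurd ⟨h1, h2⟩ hγ⟩
  choose A hA using hA
  choose B hB using hB
  let γ : ℕ → Module.Dual k H := fun i => β + i • α
  have hγ : ∀ i, γ (i + 1) = γ i + α := fun i => by simp only [γ, succ_nsmul, add_assoc]
  have hγ0 : ∀ i, γ i ≠ 0 := h0
  have hγp : γ p = γ 0 := by simp only [γ, char_nsmul_eq_zero (k := k), zero_smul]
  have hγh : ∀ i, γ i h = β h + i * α h := fun i => by simp [γ]
  let u : ℕ → k := fun i => A (γ i) * B (γ i)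
  have hbot : ∀ i, V (γ i) = 0 ↔ rootSp k L H (γ i) = ⊥ := fun i => by
    constructor
    · intro hv
      rw [eq_bot_iff]
      intro z hz
      obtain ⟨c, -, hc⟩ := (hV _ (hγ0 i)).2 z hz
      rw [hv, smul_zero] at hc
      exact hc
    · intro hv
      have := (hV _ (hγ0 i)).1
      rwa [hv, Submodule.mem_bot] at this
  have hstep : ∀ i, (if V (γ (i + 1)) = 0 then 0 else γ (i + 1) h) = u i - u (i + 1) := fun i => by
    have a1 := hA (γ i) (hγ0 i) (hγ i ▸ hγ0 (i + 1))
    have b1 := hB (γ i) (hγ0 i) (hγ i ▸ hγ0 (i + 1))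
    have a2 := hA (γ (i + 1)) (hγ0 _) (hγ (i + 1) ▸ hγ0 (i + 2))
    have b2 := hB (γ (i + 1)) (hγ0 _) (hγ (i + 1) ▸ hγ0 (i + 2))
    rw [← hγ] at a1 b1 a2 b2
    split_ifs with hv
    · simp [u, a1.1 hv, b2.1 hv]
    · have e1 := (hV _ (hγ0 (i + 1))).1 h
      rw [hh, lie_lie, a2.2, b1.2, lie_smul, lie_smul, a1.2, b2.2, smul_smul, smul_smul,
        ← sub_smul] at e1
      have := smul_left_injective k hv e1
      simp only [u]
      linear_combination -this
  have hsum : ∑ i ∈ Finset.range p, (if V (γ (i + 1)) = 0 then 0 else γ (i + 1) h) = 0 := by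
    rw [Finset.sum_congr rfl fun i _ => hstep i, Finset.sum_range_sub']
    simp only [u, hγp, sub_self]
  set s := (Finset.range p).filter fun i => V (γ (i + 1)) ≠ 0 with hs
  have hsum2 : ∑ i ∈ s, (β h + ((i + 1 : ℕ) : k) * α h) = 0 := by
    rw [hs, Finset.sum_filter, ← hsum]
    refine Finset.sum_congr rfl fun i _ => ?_
    rw [← hγh]
    split_ifs <;> simp_all
  rw [Finset.sum_add_distrib, Finset.sum_const, nsmul_eq_mul, ← Finset.sum_mul,
    ← Nat.cast_sum] at hsum2
  have hcard0 : 0 < s.card := by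
    refine Finset.card_pos.2 ⟨p - 1, ?_⟩
    have hp1 : p - 1 + 1 = p := Nat.sub_add_cancel hp.one_le
    rw [hs, Finset.mem_filter, hp1, hγp]
    refine ⟨Finset.mem_range.2 (by have := hp.pos; omega), ?_⟩
    rw [Ne, hbot]
    simpa [γ] using hβ
  have hcardp : s.card < p := by
    obtain ⟨n, hnp, hn⟩ := hH.string_lt hp hα hαb hβ
    have : ∃ i < p, rootSp k L H (γ (i + 1)) = ⊥ := by
      rcases Nat.eq_zero_or_pos n with rfl | hpos
      · exact absurd (by simpa using hn) hβ
      · exact ⟨n - 1, by omega, by rw [Nat.sub_add_cancel hpos]; exact hn⟩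
    obtain ⟨i, hi, hib⟩ := this
    conv_rhs => rw [← Finset.card_range p]
    refine Finset.card_lt_card (Finset.filter_ssubset.2 ⟨i, Finset.mem_range.2 hi, ?_⟩)
    rw [not_not, hbot]
    exact hib
  have hcard : (s.card : k) ≠ 0 := by
    rw [Ne, CharP.cast_eq_zero_iff k p]
    exact Nat.not_dvd_of_pos_of_lt hcard0 hcardp
  set K := ∑ i ∈ s, (i + 1) with hK
  obtain ⟨j, hj⟩ : ∃ j : ℕ, (j : k) = -K := by
    refine ⟨(p - 1) * K, ?_⟩
    rw [Nat.cast_mul, Nat.cast_sub hp.one_le, CharP.cast_eq_zero]; simp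
  refine ⟨j / s.card, by rw [div_pow, cast_pow_char hp, cast_pow_char hp], ?_⟩
  rw [hj]
  field_simp
  linear_combination hsum2

theorem ad_pow_eq_zero (hp : p.Prime) [CharP k p] (hH : IsClassicalCartan H) {α : Module.Dual k H}
    (hα : α ≠ 0) {x : L} (hx : x ∈ rootSp k L H α) : LieAlgebra.ad k L x ^ p = 0 := by
  by_cases hx0 : x = 0
  · rw [hx0, map_zero, zero_pow hp.ne_zero]
  have hb : rootSp k L H α ≠ ⊥ := fun hb => hx0 (by rwa [hb, Submodule.mem_bot] at hx)
  refine hH.ext_rootSp fun β y hy => ?_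
  by_cases hβ : rootSp k L H β = ⊥
  · rw [hβ, Submodule.mem_bot] at hy
    simp [hy]
  have hpow : ∀ n : ℕ, (LieAlgebra.ad k L x ^ n) y ∈ rootSp k L H (β + n • α) := by
    intro n
    induction n with
    | zero => simpa using hy
    | succ n ih =>
      rw [pow_succ', Module.End.mul_apply, succ_nsmul', add_left_comm]
      exact lie_mem_rootSp hx ih
  obtain ⟨n, hn, hnb⟩ := hH.string_lt hp hα hb hβ
  have := hpow n
  rw [hnb, Submodule.mem_bot] at this
  rw [← Nat.sub_add_cancel hn.le, pow_add, Module.End.mul_apply, this, map_zero,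
    LinearMap.zero_apply]

theorem ad_pow_apply {h : H} {α : Module.Dual k H} {x : L} (hx : x ∈ rootSp k L H α) (n : ℕ) :
    (LieAlgebra.ad k L (h : L) ^ n) x = α h ^ n • x := by
  induction n with
  | zero => simp
  | succ n ih =>
    rw [pow_succ', Module.End.mul_apply, ih, map_smul, LieAlgebra.ad_apply, hx h, smul_smul,
      pow_succ]

theorem ad_pow_mem_innerEnd (hp : p.Prime) (hp3 : 3 ≤ p) [CharP k p] (hH : IsClassicalCartan H)
    (m : L) : LieAlgebra.ad k L m ^ p ∈ innerEnd k L := by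
  let S : Submodule k L :=
    { carrier := {m | LieAlgebra.ad k L m ^ p ∈ innerEnd k L}
      zero_mem' := by simp [zero_pow hp.ne_zero]
      add_mem' := fun {a b} ha hb => by
        have := ad_add_pow_sub_mem hp hp3 a (LieDerivation.ad k L b)
        rw [LieDerivation.coe_ad_apply_eq_ad_apply, ← map_add] at this
        have := add_mem (add_mem this hb) ha
        simpa using this
      smul_mem' := fun c a ha => by
        have := (innerEnd k L).smul_mem (c ^ p) ha
        simpa [smul_pow] using this }
  have hS : S = ⊤ := by
    refine hH.eq_top_of_rootSp_le (fun α hα x hx => ?_) fun α hα x hx y hy => ?_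
    · change LieAlgebra.ad k L x ^ p ∈ innerEnd k L
      rw [hH.ad_pow_eq_zero hp hα hx]
      exact Submodule.zero_mem _
    · change LieAlgebra.ad k L ⁅x, y⁆ ^ p ∈ innerEnd k L
      by_cases hb : rootSp k L H α = ⊥
      · rw [hb, Submodule.mem_bot] at hx
        simp [hx, zero_pow hp.ne_zero]
      have hxy : ⁅x, y⁆ ∈ H := by
        rw [← hH.mem_zero]
        simpa using lie_mem_rootSp hx hy
      let h : H := ⟨⁅x, y⁆, hxy⟩
      have : LieAlgebra.ad k L ⁅x, y⁆ ^ p = α h ^ (p - 1) • LieAlgebra.ad k L ⁅x, y⁆ := by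
        refine hH.ext_rootSp fun β z hz => ?_
        by_cases hβ : rootSp k L H β = ⊥
        · rw [hβ, Submodule.mem_bot] at hz
          simp [hz]
        obtain ⟨c, hc, hcβ⟩ := hH.exists_eq_mul hp hα hb hβ hx hy (h := h) rfl
        have e1 := ad_pow_apply (h := h) hz p
        rw [LinearMap.smul_apply, LieAlgebra.ad_apply]
        have e2 := hz h
        simp only [h] at e1 e2 hcβ ⊢
        rw [e1, e2, smul_smul, hcβ, mul_pow, hc, ← mul_assoc, mul_comm _ c, mul_assoc, ← pow_succ,
          Nat.sub_add_cancel hp.one_le]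
      rw [this]
      exact Submodule.smul_mem _ _ (ad_mem_innerEnd _)
  have : m ∈ S := hS ▸ Submodule.mem_top
  exact this

end IsClassicalCartan

end ElemAb

namespace ElemAb

variable {p : ℕ} {k L : Type} [Field k] [LieRing L] [LieAlgebra k L] {H : LieSubalgebra k L}

namespace IsClassicalCartan

/-- The `p`-th power map of the Cartan subalgebra is surjective. -/
theorem exists_pow_root (hp : p.Prime) [IsAlgClosed k] [CharP k p] (hH : IsClassicalCartan H)
    (z : H) : ∃ h : H, ∀ γ, rootSp k L H γ ≠ ⊥ → γ h ^ p = γ z := by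
  have := Fact.mk hp
  have := hH.abelian
  let R : Submodule k H :=
    { carrier := {z | ∃ h : H, ∀ γ, rootSp k L H γ ≠ ⊥ → γ h ^ p = γ z}
      zero_mem' := ⟨0, fun γ _ => by simp [hp.ne_zero]⟩
      add_mem' := fun {a b} ⟨h, hh⟩ ⟨h', hh'⟩ => ⟨h + h', fun γ hγ => by
        rw [map_add, map_add, add_pow_char, hh γ hγ, hh' γ hγ]⟩
      smul_mem' := fun c a ⟨h, hh⟩ => by
        obtain ⟨d, hd⟩ := IsAlgClosed.exists_pow_nat_eq c hp.pos
        exact ⟨d • h, fun γ hγ => by simp [mul_pow, hd, hh γ hγ]⟩ }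
  have hS : R.map H.toSubmodule.subtype ⊔ ⨆ α, ⨆ _ : α ≠ 0, rootSp k L H α = ⊤ := by
    refine hH.eq_top_of_rootSp_le (fun α hα => ?_) fun α hα x hx y hy => ?_
    · exact (le_iSup₂ (f := fun α (_ : α ≠ 0) => rootSp k L H α) α hα).trans le_sup_right
    · by_cases hb : rootSp k L H α = ⊥
      · rw [hb, Submodule.mem_bot] at hx
        simp [hx]
      have hxy : ⁅x, y⁆ ∈ H := by
        rw [← hH.mem_zero]
        simpa using lie_mem_rootSp hx hy
      refine Submodule.mem_sup_left ⟨⟨⁅x, y⁆, hxy⟩, ?_, rfl⟩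
      set h : H := ⟨⁅x, y⁆, hxy⟩ with hh
      obtain ⟨b, hb'⟩ := IsAlgClosed.exists_pow_nat_eq (α h) hp.pos
      refine ⟨(b / α h) • h, fun γ hγ => ?_⟩
      obtain ⟨c, hc, hcγ⟩ := hH.exists_eq_mul hp hα hb hγ hx hy (h := h) rfl
      rw [map_smul, smul_eq_mul, hcγ]
      by_cases h0 : α h = 0
      · simp [h0, hp.ne_zero]
      · rw [show b / α h * (c * α h) = b * c by field_simp, mul_pow, hb', hc, mul_comm]
  have hz : (z : L) ∈ R.map H.toSubmodule.subtype ⊔ ⨆ α, ⨆ _ : α ≠ 0, rootSp k L H α :=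
    hS ▸ Submodule.mem_top
  obtain ⟨_, ⟨r, hr, rfl⟩, w, hw, hrw⟩ := Submodule.mem_sup.1 hz
  have hw0 : w ∈ rootSp k L H 0 := by
    rw [hH.mem_zero, show w = z - r from eq_sub_of_add_eq' hrw]
    exact H.sub_mem z.2 r.2
  have : w = 0 := Submodule.disjoint_def.1 (iSupIndep_rootSp (H := H) 0) w hw0 hw
  have hzr : z = r := by
    rw [this, add_zero] at hrw
    exact Subtype.ext hrw.symm
  rw [hzr]
  exact hr

theorem toral_mem_innerEnd (hp : p.Prime) [IsAlgClosed k] [CharP k p] (hH : IsClassicalCartan H)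
    {T : LieDerivation k L L} (hT : IsToral H T) (hTp : T.toLinearMap ^ p ∈ innerEnd k L) :
    T.toLinearMap ∈ innerEnd k L := by
  have := Fact.mk hp
  obtain ⟨z, hz⟩ := mem_innerEnd.1 hTp
  have hpow : ∀ (α : Module.Dual k H) (c : k), (∀ x ∈ rootSp k L H α, T x = c • x) →
      ∀ x ∈ rootSp k L H α, ∀ n : ℕ, ((T.toLinearMap : Module.End k L) ^ n) x = c ^ n • x := by
    intro α c hc x hx n
    induction n with
    | zero => simp
    | succ n ih =>
      rw [pow_succ', Module.End.mul_apply, ih, map_smul]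
      change c ^ n • T x = _
      rw [hc x hx, smul_smul, pow_succ]
  have hzH : z ∈ H := by
    rw [← hH.mem_zero]
    intro h
    have h1 : (T.toLinearMap ^ p) (h : L) = 0 := by
      rw [hpow 0 0 (fun x hx => by rw [hT.1 x (hH.mem_zero.1 hx), zero_smul]) h
        (hH.mem_zero.2 h.2) p, zero_pow hp.ne_zero, zero_smul]
    rw [LinearMap.zero_apply, zero_smul, ← lie_skew, ← hz, h1, neg_zero]
  obtain ⟨h, hh⟩ := hH.exists_pow_root hp ⟨z, hzH⟩
  have : T.toLinearMap = LieAlgebra.ad k L (h : L) := hH.ext_rootSp fun α x hx => by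
    by_cases hx0 : x = 0
    · simp [hx0]
    have hb : rootSp k L H α ≠ ⊥ := fun hb => hx0 (by rwa [hb, Submodule.mem_bot] at hx)
    obtain ⟨c, -, hc⟩ := hH.exists_smul_of_isToral hT α
    have e1 := hpow α c hc x hx p
    rw [hz, hx ⟨z, hzH⟩, ← hh α hb] at e1
    have e2 : α h = c := frobenius_inj k p (smul_left_injective k hx0 e1)
    rw [LieAlgebra.ad_apply, hx h, e2]
    exact hc x hx
  rw [this]
  exact ad_mem_innerEnd _

theorem lie_mem_innerEnd [FiniteDimensional k L] [Infinite k] (hH : IsClassicalCartan H)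
    (D E : LieDerivation k L L) : (⁅D, E⁆ : LieDerivation k L L).toLinearMap ∈ innerEnd k L := by
  obtain ⟨m, T, rfl, hT⟩ := hH.exists_ad_add_toral D
  obtain ⟨n, S, rfl, hS⟩ := hH.exists_ad_add_toral E
  refine mem_innerEnd.2 ⟨⁅m, n⁆ - S m + T n, fun x => ?_⟩
  change ⁅LieDerivation.ad k L m + T, LieDerivation.ad k L n + S⁆ x = _
  have h1 : ⁅LieDerivation.ad k L m, S⁆ = - LieDerivation.ad k L (S m) := by
    rw [← LieDerivation.lie_der_ad_eq_ad_der, lie_skew]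
  rw [lie_add, add_lie, add_lie, hH.lie_toral_eq_zero hT hS, h1,
    LieDerivation.lie_der_ad_eq_ad_der, LieDerivation.lie_der_ad_eq_ad_der]
  simp only [LieDerivation.add_apply, LieDerivation.neg_apply, LieDerivation.ad_apply_apply,
    add_lie, sub_lie, LieDerivation.zero_apply]
  abel

theorem mem_innerEnd_of_pow_eq_zero (hp : p.Prime) (hp3 : 3 ≤ p) [IsAlgClosed k] [CharP k p]
    [FiniteDimensional k L] (hH : IsClassicalCartan H) {D : LieDerivation k L L}
    (hD : D.toLinearMap ^ p = (0 : Module.End k L)) : D.toLinearMap ∈ innerEnd k L := by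
  have : Infinite k := IsAlgClosed.instInfinite
  obtain ⟨m, T, rfl, hT⟩ := hH.exists_ad_add_toral D
  have hsum : (LieDerivation.ad k L m + T).toLinearMap =
      LieAlgebra.ad k L m + T.toLinearMap := by
    ext x; simp
  have h1 := ad_add_pow_sub_mem hp hp3 m T
  rw [← hsum, hD] at h1
  have h2 := neg_mem (add_mem h1 (hH.ad_pow_mem_innerEnd hp hp3 m))
  rw [hsum]
  refine add_mem (ad_mem_innerEnd m) (hH.toral_mem_innerEnd hp hT ?_)
  convert h2 using 1
  abel

end IsClassicalCartan

theorem IsClassicalLie.exists_isClassicalCartan [FiniteDimensional k L] (h : IsClassicalLie k L) :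
    ∃ H : LieSubalgebra k L, IsClassicalCartan H := by
  obtain ⟨h1, h2, H, h3, h4, h5, h6, -, h7⟩ := h
  exact ⟨H, h3, h4, h1, h2, h5, h6, h7⟩

end ElemAb

namespace ElemAb

variable {p : ℕ} {k M : Type} [Field k] [LieRing M] [LieAlgebra k M]

/-- A perfect Lie algebra is spanned by the brackets. -/
theorem mem_span_bracket (h : ⁅(⊤ : LieIdeal k M), (⊤ : LieIdeal k M)⁆ = ⊤) (x : M) :
    x ∈ Submodule.span k {z | ∃ a b : M, ⁅a, b⁆ = z} := by
  have h1 := congrArg LieSubmodule.toSubmodule h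
  rw [LieSubmodule.lieIdeal_oper_eq_linear_span'] at h1
  have hx : x ∈ (LieSubmodule.toSubmodule (⊤ : LieIdeal k M)) := LieSubmodule.mem_top x
  rw [← h1] at hx
  refine Submodule.span_mono ?_ hx
  rintro _ ⟨a, -, b, -, rfl⟩
  exact ⟨a, b, rfl⟩

theorem apply_mem_of_perfect (D : LieDerivation k M M) {I : LieIdeal k M}
    (hI : ⁅(⊤ : LieIdeal k I), (⊤ : LieIdeal k I)⁆ = ⊤) {x : M} (hx : x ∈ I) : D x ∈ I := by
  have := mem_span_bracket hI ⟨x, hx⟩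
  have key : ∀ y : I, y ∈ Submodule.span k {z : I | ∃ a b : I, ⁅a, b⁆ = z} → D y ∈ I := by
    intro y hy
    induction hy using Submodule.span_induction with
    | zero => simp
    | add a b _ _ ha hb => simpa using I.add_mem ha hb
    | smul c a _ ha => simpa using I.smul_mem c ha
    | mem y hy =>
      obtain ⟨a, b, rfl⟩ := hy
      change D ⁅(a : M), (b : M)⁆ ∈ I
      rw [D.apply_lie_eq_add]
      exact I.add_mem (lie_mem_left k M I _ _ a.2) (lie_mem_right k M I _ _ b.2)
  exact key _ this

/-- The restriction of a derivation to an invariant ideal. -/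
def restrictDer (D : LieDerivation k M M) (I : LieIdeal k M) (h : ∀ x ∈ I, D x ∈ I) :
    LieDerivation k I I where
  toLinearMap := D.toLinearMap.restrict h
  leibniz' a b := Subtype.ext (D.apply_lie_eq_sub a b)

theorem coe_restrictDer_pow (D : LieDerivation k M M) (I : LieIdeal k M) (h : ∀ x ∈ I, D x ∈ I)
    (n : ℕ) (x : I) : ((((restrictDer D I h).toLinearMap : Module.End k I) ^ n) x : M) =
      ((D.toLinearMap : Module.End k M) ^ n) x := by
  induction n with
  | zero => simp
  | succ n ih =>
    rw [pow_succ', pow_succ', Module.End.mul_apply, Module.End.mul_apply, ← ih]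
    rfl

section DirectSum

variable {ι : Type} {I : ι → LieIdeal k M}

theorem lie_eq_zero_of_iSupIndep (hind : iSupIndep I) {i j : ι} (hij : i ≠ j) {x y : M}
    (hx : x ∈ I i) (hy : y ∈ I j) : ⁅x, y⁆ = 0 := by
  have h := (hind.pairwiseDisjoint hij).le_bot
    ⟨lie_mem_left k M (I i) x y hx, lie_mem_right k M (I j) x y hy⟩
  simpa using h

variable [Fintype ι]

theorem exists_sum_of_iSup_eq_top (htop : iSup I = ⊤) (m : M) :
    ∃ z : ι → M, (∀ i, z i ∈ I i) ∧ m = ∑ i, z i := by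
  have hm : m ∈ ⨆ i, (I i).toSubmodule := by
    rw [← LieSubmodule.iSup_toSubmodule, htop]
    exact LieSubmodule.mem_top m
  obtain ⟨f, hf, rfl⟩ := (Submodule.mem_iSup_iff_exists_finsupp _ _).1 hm
  exact ⟨f, hf, Finsupp.sum_fintype _ _ fun _ => rfl⟩

theorem sum_lie_of_mem (hind : iSupIndep I) {z : ι → M} (hz : ∀ i, z i ∈ I i) {i : ι} {y : M}
    (hy : y ∈ I i) : ⁅∑ j, z j, y⁆ = ⁅z i, y⁆ := by
  rw [sum_lie, Finset.sum_eq_single i]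
  · exact fun j _ hj => lie_eq_zero_of_iSupIndep hind hj (hz j) hy
  · exact fun h => absurd (Finset.mem_univ i) h

theorem mem_innerEnd_of_forall (hind : iSupIndep I) (htop : iSup I = ⊤) {f : Module.End k M}
    (hf : ∀ i, ∃ m : I i, ∀ y : I i, f y = ⁅(m : M), (y : M)⁆) : f ∈ innerEnd k M := by
  choose m hm using hf
  refine mem_innerEnd.2 ⟨∑ i, (m i : M), fun x => ?_⟩
  obtain ⟨z, hz, rfl⟩ := exists_sum_of_iSup_eq_top htop x
  rw [map_sum, lie_sum]
  refine Finset.sum_congr rfl fun i _ => ?_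
  rw [sum_lie_of_mem hind (fun i => (m i).2) (hz i)]
  exact hm i ⟨z i, hz i⟩

end DirectSum

namespace IsClassicalSemisimple

theorem lie_mem_innerEnd [FiniteDimensional k M] [Infinite k] (h : IsClassicalSemisimple k M)
    (D E : LieDerivation k M M) : (⁅D, E⁆ : LieDerivation k M M).toLinearMap ∈ innerEnd k M := by
  obtain ⟨ι, _, I, hI, hind, htop⟩ := h
  refine mem_innerEnd_of_forall hind htop fun i => ?_
  obtain ⟨H, hH⟩ := (hI i).2.exists_isClassicalCartan
  have hinv (D : LieDerivation k M M) : ∀ x ∈ I i, D x ∈ I i :=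
    fun x hx => apply_mem_of_perfect D hH.perfect hx
  obtain ⟨m, hm⟩ := mem_innerEnd.1 <|
    hH.lie_mem_innerEnd (restrictDer D (I i) (hinv D)) (restrictDer E (I i) (hinv E))
  exact ⟨m, fun y => congrArg Subtype.val (hm y)⟩

theorem ad_pow_mem_innerEnd (hp : p.Prime) (hp3 : 3 ≤ p) [IsAlgClosed k] [CharP k p]
    [FiniteDimensional k M] (h : IsClassicalSemisimple k M) (m : M) :
    LieAlgebra.ad k M m ^ p ∈ innerEnd k M := by
  obtain ⟨ι, _, I, hI, hind, htop⟩ := h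
  refine mem_innerEnd_of_forall hind htop fun i => ?_
  obtain ⟨H, hH⟩ := (hI i).2.exists_isClassicalCartan
  obtain ⟨z, hz, rfl⟩ := exists_sum_of_iSup_eq_top htop m
  obtain ⟨n, hn⟩ := mem_innerEnd.1 (hH.ad_pow_mem_innerEnd hp hp3 ⟨z i, hz i⟩)
  refine ⟨n, fun y => ?_⟩
  have key : ∀ j : ℕ, (LieAlgebra.ad k M (∑ i, z i) ^ j) (y : M) =
      ((LieAlgebra.ad k (I i) ⟨z i, hz i⟩ ^ j) y : M) := by
    intro j
    induction j with
    | zero => simp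
    | succ j ih =>
      rw [pow_succ', pow_succ', Module.End.mul_apply, Module.End.mul_apply, ih,
        LieAlgebra.ad_apply, sum_lie_of_mem hind hz (Subtype.prop _)]
      rfl
  rw [key, hn]
  rfl

theorem mem_innerEnd_of_pow_eq_zero (hp : p.Prime) (hp3 : 3 ≤ p) [IsAlgClosed k] [CharP k p]
    [FiniteDimensional k M] (h : IsClassicalSemisimple k M) {D : LieDerivation k M M}
    (hD : D.toLinearMap ^ p = (0 : Module.End k M)) : D.toLinearMap ∈ innerEnd k M := by
  obtain ⟨ι, _, I, hI, hind, htop⟩ := h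
  refine mem_innerEnd_of_forall hind htop fun i => ?_
  obtain ⟨H, hH⟩ := (hI i).2.exists_isClassicalCartan
  have hinv : ∀ x ∈ I i, D x ∈ I i := fun x hx => apply_mem_of_perfect D hH.perfect hx
  have h0 : (restrictDer D (I i) hinv).toLinearMap ^ p = (0 : Module.End k (I i)) :=
    LinearMap.ext fun x => Subtype.ext <| by
      rw [coe_restrictDer_pow, hD]
      rfl
  obtain ⟨m, hm⟩ := mem_innerEnd.1 (hH.mem_innerEnd_of_pow_eq_zero hp hp3 h0)
  exact ⟨m, fun y => congrArg Subtype.val (hm y)⟩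

theorem center_eq_bot (h : IsClassicalSemisimple k M) : LieAlgebra.center k M = ⊥ := by
  obtain ⟨ι, _, I, hI, hind, htop⟩ := h
  refine (LieSubmodule.eq_bot_iff _).2 fun m hm => ?_
  rw [LieModule.mem_maxTrivSubmodule] at hm
  obtain ⟨z, hz, rfl⟩ := exists_sum_of_iSup_eq_top htop m
  refine Finset.sum_eq_zero fun i _ => ?_
  have hc : (⟨z i, hz i⟩ : I i) ∈ LieAlgebra.center k (I i) := by
    rw [LieModule.mem_maxTrivSubmodule]
    intro y
    refine Subtype.ext ?_
    change ⁅(y : M), z i⁆ = 0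
    rw [← lie_skew, ← sum_lie_of_mem hind hz y.2, lie_skew, hm]
  rw [(hI i).2.1, LieSubmodule.mem_bot] at hc
  exact congrArg Subtype.val hc

theorem mem_span_bracket (h : IsClassicalSemisimple k M) (x : M) :
    x ∈ Submodule.span k {z | ∃ a b : M, ⁅a, b⁆ = z} := by
  obtain ⟨ι, _, I, hI, hind, htop⟩ := h
  obtain ⟨z, hz, rfl⟩ := exists_sum_of_iSup_eq_top htop x
  refine Submodule.sum_mem _ fun i _ => ?_
  have h1 := Submodule.mem_map_of_mem (f := (I i).toSubmodule.subtype)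
    (ElemAb.mem_span_bracket (hI i).2.2.1 ⟨z i, hz i⟩)
  rw [Submodule.map_span] at h1
  refine Submodule.span_mono ?_ h1
  rintro _ ⟨_, ⟨a, b, rfl⟩, rfl⟩
  exact ⟨a, b, rfl⟩

end IsClassicalSemisimple

end ElemAb

namespace ElemAb

variable {k M N : Type} [Field k] [LieRing M] [LieAlgebra k M] [LieRing N] [LieAlgebra k N]

section Transport

/-- A Lie subalgebra is linearly equivalent to its image under an isomorphism. -/
def subalgebraEquiv (e : M ≃ₗ⁅k⁆ N) (H : LieSubalgebra k M) :
    H ≃ₗ[k] H.comap e.symm.toLieHom where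
  toFun h := ⟨e h, by simp [LieSubalgebra.mem_comap]⟩
  invFun h := ⟨e.symm h, h.2⟩
  map_add' a b := Subtype.ext (map_add e (a : M) b)
  map_smul' c a := Subtype.ext (map_smul e c (a : M))
  left_inv a := Subtype.ext (e.symm_apply_apply a)
  right_inv a := Subtype.ext (e.apply_symm_apply a)

theorem rootSp_comap_symm (e : M ≃ₗ⁅k⁆ N) (H : LieSubalgebra k M)
    (α : Module.Dual k (H.comap e.symm.toLieHom)) :
    rootSp k N (H.comap e.symm.toLieHom) α =
      (rootSp k M H ((subalgebraEquiv e H).dualMap α)).map (e.toLinearEquiv : M →ₗ[k] N) := by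
  ext y
  rw [Submodule.mem_map]
  constructor
  · intro hy
    refine ⟨e.symm y, fun h => ?_, e.apply_symm_apply y⟩
    have := congrArg e.symm (hy (subalgebraEquiv e H h))
    rw [LieEquiv.map_lie, map_smul] at this
    change ⁅e.symm (e h), e.symm y⁆ = _ at this
    rwa [e.symm_apply_apply] at this
  · rintro ⟨x, hx, rfl⟩ h
    have := congrArg e (hx ((subalgebraEquiv e H).symm h))
    rw [LieEquiv.map_lie, map_smul] at this
    change ⁅e (e.symm h), e x⁆ = _ at this
    rw [e.apply_symm_apply] at this
    change ⁅(h : N), e x⁆ = α h • e x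
    rw [this, LinearEquiv.dualMap_apply, LinearEquiv.apply_symm_apply]

theorem IsClassicalLie.of_equiv (e : M ≃ₗ⁅k⁆ N) (h : IsClassicalLie k M) : IsClassicalLie k N := by
  obtain ⟨hc, hperf, H, hH, hab, hsup, hfin, hfin', hstr⟩ := h
  have hroot := rootSp_comap_symm e H
  have hbot : ∀ α, rootSp k N (H.comap e.symm.toLieHom) α ≠ ⊥ →
      rootSp k M H ((subalgebraEquiv e H).dualMap α) ≠ ⊥ := fun α hα h0 => hα <| by
    rw [hroot, h0, Submodule.map_bot]
  have hne : ∀ α, α ≠ 0 → (subalgebraEquiv e H).dualMap α ≠ 0 := fun α hα => by simpa using hα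
  have hab' : IsLieAbelian (H.comap e.symm.toLieHom) := ⟨fun a b => Subtype.ext <| by
    have := congrArg Subtype.val
      (hab.trivial ((subalgebraEquiv e H).symm a) ((subalgebraEquiv e H).symm b))
    change ⁅e.symm a, e.symm b⁆ = 0 at this
    rw [← LieEquiv.map_lie] at this
    exact e.symm.injective (this.trans (map_zero _).symm)⟩
  refine ⟨?_, ?_, H.comap e.symm.toLieHom, ⟨inferInstance, ?_⟩, hab', ?_, fun α h0 hα => ?_,
    fun α h0 hα => ?_, fun α h0 hα β hβ => ?_⟩
  · refine (LieSubmodule.eq_bot_iff _).2 fun y hy => ?_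
    have : e.symm y ∈ LieAlgebra.center k M := by
      rw [LieModule.mem_maxTrivSubmodule] at hy ⊢
      intro x
      rw [← e.symm_apply_apply x, ← LieEquiv.map_lie, hy, map_zero]
    rw [hc, LieSubmodule.mem_bot] at this
    exact e.symm.injective (this.trans (map_zero _).symm)
  · rw [← LieSubmodule.toSubmodule_inj, LieSubmodule.lieIdeal_oper_eq_linear_span'] at hperf ⊢
    have := congrArg (Submodule.map (e.toLinearEquiv : M →ₗ[k] N)) hperf
    rw [Submodule.map_span, LieSubmodule.top_toSubmodule, Submodule.map_top,
      LinearEquiv.range] at this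
    rw [LieSubmodule.top_toSubmodule, eq_top_iff, ← this]
    refine Submodule.span_mono ?_
    rintro _ ⟨_, ⟨a, -, b, -, rfl⟩, rfl⟩
    exact ⟨e a, trivial, e b, trivial, (LieEquiv.map_lie e a b).symm⟩
  · refine le_antisymm (fun y hy => ?_) (LieSubalgebra.le_normalizer _)
    change e.symm y ∈ H
    rw [← hH.self_normalizing, LieSubalgebra.mem_normalizer_iff]
    rw [LieSubalgebra.mem_normalizer_iff] at hy
    intro x hx
    have := hy (e x) (by simpa [LieSubalgebra.mem_comap] using hx)
    change e.symm ⁅y, e x⁆ ∈ H at this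
    rwa [LieEquiv.map_lie, e.symm_apply_apply] at this
  · simp_rw [hroot]
    rw [← Submodule.map_iSup, (subalgebraEquiv e H).dualMap.surjective.iSup_comp
      (g := fun α => rootSp k M H α), hsup, Submodule.map_top, LinearEquiv.range]
  · rw [hroot, LinearEquiv.finrank_map_eq]
    exact hfin _ (hne α h0) (hbot α hα)
  · rw [← hfin' _ (hne α h0) (hbot α hα), ← LinearEquiv.finrank_map_eq e.toLinearEquiv,
      Submodule.map_span]
    suffices h : {z : N | ∃ x ∈ rootSp k N _ α, ∃ y ∈ rootSp k N _ (-α), ⁅x, y⁆ = z} =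
        e.toLinearEquiv '' _ from congrArg (fun s => Module.finrank k (Submodule.span k s)) h
    ext z
    simp only [hroot, map_neg]
    constructor
    · rintro ⟨_, ⟨x, hx, rfl⟩, _, ⟨y, hy, rfl⟩, rfl⟩
      exact ⟨⁅x, y⁆, ⟨x, hx, y, hy, rfl⟩, LieEquiv.map_lie e x y⟩
    · rintro ⟨_, ⟨x, hx, y, hy, rfl⟩, rfl⟩
      exact ⟨e x, ⟨x, hx, rfl⟩, e y, ⟨y, hy, rfl⟩, (LieEquiv.map_lie e x y).symm⟩
  · obtain ⟨n, hn⟩ := hstr _ (hne α h0) (hbot α hα) _ (hbot β hβ)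
    refine ⟨n, ?_⟩
    rw [hroot, map_add, map_nsmul, hn, Submodule.map_bot]

/-- The lattice isomorphism between the ideals of isomorphic Lie algebras. -/
def idealOrderIso (e : M ≃ₗ⁅k⁆ N) : LieIdeal k M ≃o LieIdeal k N where
  toFun I := I.comap e.symm.toLieHom
  invFun J := J.comap e.toLieHom
  left_inv I := by ext x; simp [LieIdeal.mem_comap]
  right_inv J := by ext x; simp [LieIdeal.mem_comap]
  map_rel_iff' {I J} := by
    refine ⟨fun h x hx => ?_, fun h x hx => ?_⟩
    · have : e x ∈ LieIdeal.comap e.symm.toLieHom J := h (by simpa [LieIdeal.mem_comap] using hx)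
      simpa [LieIdeal.mem_comap] using this
    · exact h (show e.symm x ∈ I from hx)

theorem isSimple_of_equiv (e : M ≃ₗ⁅k⁆ N) (h : LieAlgebra.IsSimple k M) :
    LieAlgebra.IsSimple k N where
  eq_bot_or_eq_top J := by
    refine (h.eq_bot_or_eq_top ((idealOrderIso e).symm J)).imp (fun h => ?_) fun h => ?_
    · rwa [map_eq_bot_iff] at h
    · rwa [map_eq_top_iff] at h
  non_abelian hN := h.non_abelian ⟨fun x y => e.injective <| by
    rw [LieHom.map_lie, hN.trivial, map_zero]⟩

/-- An isomorphism of Lie algebras restricts to corresponding ideals. -/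
def idealEquiv (e : M ≃ₗ⁅k⁆ N) (I : LieIdeal k M) : I ≃ₗ⁅k⁆ idealOrderIso e I where
  toFun x := ⟨e x, show e.symm (e x) ∈ I by simp⟩
  invFun y := ⟨e.symm y, y.2⟩
  map_add' a b := Subtype.ext (map_add e (a : M) b)
  map_smul' c a := Subtype.ext (map_smul e c (a : M))
  map_lie' {a b} := Subtype.ext (LieEquiv.map_lie e (a : M) b)
  left_inv a := Subtype.ext (e.symm_apply_apply a)
  right_inv a := Subtype.ext (e.apply_symm_apply a)

theorem IsClassicalSemisimple.of_equiv (e : M ≃ₗ⁅k⁆ N) (h : IsClassicalSemisimple k M) :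
    IsClassicalSemisimple k N := by
  obtain ⟨ι, hι, I, hI, hind, htop⟩ := h
  refine ⟨ι, hι, fun i => idealOrderIso e (I i), fun i =>
    ⟨isSimple_of_equiv (idealEquiv e (I i)) (hI i).1, (hI i).2.of_equiv (idealEquiv e (I i))⟩,
    hind.map_orderIso _, ?_⟩
  rw [← OrderIso.map_iSup, htop, map_top]

end Transport

end ElemAb

namespace ElemAb

variable {p : ℕ} {k L M : Type} [Field k] [LieRing L] [LieAlgebra k L] [LieRing M]
  [LieAlgebra k M]

section Embedding

variable {φ : L →ₗ⁅k⁆ LieDerivation k M M}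

theorem map_ad_pow_of_map_eq_ad {x y : L} {m : M} (hy : φ y = LieDerivation.ad k M m) (n : ℕ) :
    φ ((LieAlgebra.ad k L x ^ n) y) =
      LieDerivation.ad k M ((((φ x).toLinearMap : Module.End k M) ^ n) m) := by
  induction n with
  | zero => simpa using hy
  | succ n ih =>
    rw [pow_succ', pow_succ', Module.End.mul_apply, Module.End.mul_apply, LieAlgebra.ad_apply,
      LieHom.map_lie, ih, LieDerivation.lie_der_ad_eq_ad_der]
    rfl

/-- The `p`-map of a Lie algebra of derivations containing the inner ones is the `p`-th power. -/
theorem map_pmap (P : pStructure p k L) (hc : LieAlgebra.center k M = ⊥)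
    (hφ : ∀ m : M, LieDerivation.ad k M m ∈ Set.range φ) (x : L) :
    (φ (P.pmap x)).toLinearMap = ((φ x).toLinearMap : Module.End k M) ^ p := by
  ext m
  obtain ⟨y, hy⟩ := hφ m
  have h1 := map_ad_pow_of_map_eq_ad (x := x) hy p
  rw [← P.ad_pmap, LieHom.map_lie, hy, LieDerivation.lie_der_ad_eq_ad_der] at h1
  exact LieDerivation.injective_ad_of_center_eq_bot hc h1

theorem mem_derived_iff [FiniteDimensional k M] [Infinite k] (hM : IsClassicalSemisimple k M)
    (hinj : Function.Injective φ) (hφ : ∀ m : M, LieDerivation.ad k M m ∈ Set.range φ) (x : L) :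
    x ∈ ⁅(⊤ : LieIdeal k L), (⊤ : LieIdeal k L)⁆ ↔ (φ x).toLinearMap ∈ innerEnd k M := by
  constructor
  · intro hx
    rw [← LieSubmodule.mem_toSubmodule, LieSubmodule.lieIdeal_oper_eq_linear_span'] at hx
    induction hx using Submodule.span_induction with
    | zero => rw [map_zero]; exact zero_mem _
    | add a b _ _ ha hb => rw [map_add]; exact add_mem ha hb
    | smul c a _ ha => rw [map_smul]; exact Submodule.smul_mem _ c ha
    | mem x hx =>
      obtain ⟨a, -, b, -, rfl⟩ := hx
      rw [LieHom.map_lie]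
      exact hM.lie_mem_innerEnd _ _
  · intro hx
    obtain ⟨m, hm⟩ := mem_innerEnd.1 hx
    have hxm : φ x = LieDerivation.ad k M m := LieDerivation.ext fun y => by
      rw [LieDerivation.ad_apply_apply, ← hm]
      rfl
    have key : ∀ m ∈ Submodule.span k {z | ∃ a b : M, ⁅a, b⁆ = z}, ∀ x, φ x =
        LieDerivation.ad k M m → x ∈ ⁅(⊤ : LieIdeal k L), (⊤ : LieIdeal k L)⁆ := by
      intro m hm
      induction hm using Submodule.span_induction with
      | zero =>
        intro x hx
        rw [map_zero] at hx
        rw [hinj (hx.trans (map_zero φ).symm)]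
        exact zero_mem _
      | add a b _ _ ha hb =>
        intro x hx
        obtain ⟨y, hy⟩ := hφ a
        have := hb (x - y) (by rw [map_sub, hx, hy, map_add, add_sub_cancel_left])
        simpa using add_mem this (ha y hy)
      | smul c a _ ha =>
        intro x hx
        obtain ⟨y, hy⟩ := hφ a
        rw [show x = c • y from hinj (by rw [hx, map_smul, map_smul, hy])]
        exact Submodule.smul_mem (LieSubmodule.toSubmodule _) c (ha y hy)
      | mem m hm =>
        obtain ⟨a, b, rfl⟩ := hm
        intro x hx
        obtain ⟨y, hy⟩ := hφ a
        obtain ⟨z, hz⟩ := hφ b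
        rw [show x = ⁅y, z⁆ from hinj (by rw [hx, LieHom.map_lie, LieHom.map_lie, hy, hz])]
        exact LieSubmodule.lie_mem_lie (LieSubmodule.mem_top y) (LieSubmodule.mem_top z)
    exact key m (hM.mem_span_bracket m) x hxm

theorem nonempty_equiv_derived [FiniteDimensional k M] [Infinite k]
    (hM : IsClassicalSemisimple k M) (hinj : Function.Injective φ)
    (hφ : ∀ m : M, LieDerivation.ad k M m ∈ Set.range φ) :
    Nonempty (M ≃ₗ⁅k⁆ ↥⁅(⊤ : LieIdeal k L), (⊤ : LieIdeal k L)⁆) := by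
  choose f hf using hφ
  have hmem (m : M) : f m ∈ ⁅(⊤ : LieIdeal k L), (⊤ : LieIdeal k L)⁆ := by
    rw [mem_derived_iff hM hinj fun m => ⟨f m, hf m⟩, hf]
    exact mem_innerEnd.2 ⟨m, fun x => LieDerivation.ad_apply_apply k M m x⟩
  let F : M →ₗ⁅k⁆ ↥⁅(⊤ : LieIdeal k L), (⊤ : LieIdeal k L)⁆ :=
    { toFun m := ⟨f m, hmem m⟩
      map_add' a b := Subtype.ext <| hinj <| by
        change φ (f (a + b)) = φ (f a + f b)
        simp only [map_add, hf]
      map_smul' c a := Subtype.ext <| hinj <| by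
        change φ (f (c • a)) = φ (c • f a)
        simp only [map_smul, hf]
      map_lie' {a b} := Subtype.ext <| hinj <| by
        change φ (f ⁅a, b⁆) = φ ⁅f a, f b⁆
        simp only [LieHom.map_lie, hf] }
  refine ⟨LieEquiv.ofBijective F ⟨fun a b hab => ?_, fun x => ?_⟩⟩
  · refine LieDerivation.injective_ad_of_center_eq_bot hM.center_eq_bot ?_
    rw [← hf a, ← hf b]
    exact congrArg (fun z => φ (Subtype.val z)) hab
  · obtain ⟨m, hm⟩ :=
      mem_innerEnd.1 ((mem_derived_iff hM hinj (fun m => ⟨f m, hf m⟩) x).1 x.2)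
    refine ⟨m, Subtype.ext <| hinj <| (hf m).trans <| LieDerivation.ext fun y => ?_⟩
    rw [LieDerivation.ad_apply_apply, ← hm]
    rfl

end Embedding

end ElemAb

open ElemAb

/-- If `(g,[p])` is almost classical semisimple, then `[g,g]` is a
classical semisimple `p`-ideal of `g` and `V([g,g]) = V(g)`. -/
theorem statement11
    (p : ℕ) (hp : p.Prime) (hp3 : 3 ≤ p)
    (k : Type) [Field k] [IsAlgClosed k] [CharP k p]
    (L : Type) [LieRing L] [LieAlgebra k L] [FiniteDimensional k L]
    (P : pStructure p k L)
    (hacs : IsAlmostClassicalSemisimple k L) :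
    (∀ x ∈ ⁅(⊤ : LieIdeal k L), (⊤ : LieIdeal k L)⁆, P.pmap x ∈ ⁅(⊤ : LieIdeal k L), (⊤ : LieIdeal k L)⁆) ∧
    IsClassicalSemisimple k ↥(⁅(⊤ : LieIdeal k L), (⊤ : LieIdeal k L)⁆) ∧
    P.null = {x : L | x ∈ ⁅(⊤ : LieIdeal k L), (⊤ : LieIdeal k L)⁆ ∧ P.pmap x = 0} := by
  have : Infinite k := IsAlgClosed.instInfinite
  obtain ⟨M, _, _, _, hM, φ, hinj, hφ⟩ := hacs
  have hmem := mem_derived_iff hM hinj hφ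
  have hpmap := map_pmap P hM.center_eq_bot hφ
  obtain ⟨e⟩ := nonempty_equiv_derived hM hinj hφ
  refine ⟨fun x hx => ?_, hM.of_equiv e, Set.ext fun x => ⟨fun hx => ⟨?_, hx⟩, And.right⟩⟩
  · rw [hmem, hpmap]
    obtain ⟨m, hm⟩ := mem_innerEnd.1 ((hmem x).1 hx)
    rw [show (φ x).toLinearMap = LieAlgebra.ad k M m from LinearMap.ext hm]
    exact hM.ad_pow_mem_innerEnd hp hp3 m
  · rw [hmem]
    refine hM.mem_innerEnd_of_pow_eq_zero hp hp3 ?_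
    rw [← hpmap, show P.pmap x = 0 from hx, map_zero]
    rfl
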